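/- For every θ ∈ [1/4, 1/2] and every real x with 0 ≤ x ≤ 1/θ, one has P_{θ,1}(x)² ≤ P_{θ,2}(x)², where P_{θ,1}(x) = (1/2 − 2θ + θ²)(1 − θx)² and P_{θ,2}(x) = θ²·(1 + (1−2θ)x + (1/2 − 2θ + θ²)x²). -/

import Mathlib

/-!
Since `P2² - P1² = (P2 - P1) * (P2 + P1)`, it suffices that both factors are nonnegative. In the
variable `y = θ * x`, which ranges over `[0, 1]`, the quadratic terms of `P2 - P1` cancel, leaving
the affine function with values `2 * θ - 1/2` at `y = 0` and `1/2 - θ` at `y = 1`, while `P2 + P1`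
has nonnegative coefficients in the Bernstein basis `(1 - y)², y * (1 - y), y²`.
-/

section

variable {K : Type*} [Field K]

/-- The polynomial `P_{θ,1}`: the leading coefficient of the numerator of the DIRK stability
function `R_θ(x) = (1 + (1 - 2θ)x + (1/2 - 2θ + θ²)x²) / (1 - θx)²` times its denominator, so that
`P1² ≤ P2²` compares `|R_θ(∞)|` with `|R_θ(x)|`. -/
def P1 (θ x : K) : K := (1 / 2 - 2 * θ + θ ^ 2) * (1 - θ * x) ^ 2

/-- The polynomial `P_{θ,2}`: the leading coefficient `θ²` of the denominator of `R_θ` times its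
numerator. -/
def P2 (θ x : K) : K := θ ^ 2 * (1 + (1 - 2 * θ) * x + (1 / 2 - 2 * θ + θ ^ 2) * x ^ 2)

theorem P2_sub_P1_eq_bernstein [CharZero K] (θ x : K) :
    P2 θ x - P1 θ x = (2 * θ - 1 / 2) * (1 - θ * x) + (1 / 2 - θ) * (θ * x) := by
  unfold P1 P2
  ring

theorem P2_add_P1_eq_bernstein [CharZero K] (θ x : K) :
    P2 θ x + P1 θ x =
      2 * (1 / 2 - θ) ^ 2 * (1 - θ * x) ^ 2 + θ * ((θ * x) * (1 - θ * x))
        + (1 / 2 - θ) * (θ * x) ^ 2 := by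
  unfold P1 P2
  ring

variable [LinearOrder K] [IsStrictOrderedRing K] {θ x : K}

theorem P1_le_P2 (hθ : θ ∈ Set.Icc (1 / 4) (1 / 2)) (hx : θ * x ∈ Set.Icc 0 1) :
    P1 θ x ≤ P2 θ x := by
  obtain ⟨hy₀, hy₁⟩ := hx
  have hquarter : 0 ≤ 2 * θ - 1 / 2 := by linarith [hθ.1]
  have hhalf : 0 ≤ 1 / 2 - θ := sub_nonneg.2 hθ.2
  have hy : 0 ≤ 1 - θ * x := sub_nonneg.2 hy₁
  rw [← sub_nonneg, P2_sub_P1_eq_bernstein]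
  exact add_nonneg (mul_nonneg hquarter hy) (mul_nonneg hhalf hy₀)

theorem neg_P2_le_P1 (hθ : θ ∈ Set.Icc 0 (1 / 2)) (hx : θ * x ∈ Set.Icc 0 1) :
    -P2 θ x ≤ P1 θ x := by
  obtain ⟨hθ₀, hθ₁⟩ := hθ
  obtain ⟨hy₀, hy₁⟩ := hx
  have hhalf : 0 ≤ 1 / 2 - θ := sub_nonneg.2 hθ₁
  have hy : 0 ≤ 1 - θ * x := sub_nonneg.2 hy₁
  rw [neg_le_iff_add_nonneg', P2_add_P1_eq_bernstein]
  exact add_nonneg (add_nonneg (by positivity) (mul_nonneg hθ₀ (mul_nonneg hy₀ hy)))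
    (mul_nonneg hhalf (sq_nonneg _))

end

/-- For every θ ∈ [1/4, 1/2] and every real x with 0 ≤ x ≤ 1/θ,
one has P_{θ,1}(x)² ≤ P_{θ,2}(x)². -/
theorem P1_sq_le_P2_sq (θ : ℝ) (hθ : θ ∈ Set.Icc (1/4 : ℝ) (1/2))
    (x : ℝ) (hx : x ∈ Set.Icc (0 : ℝ) (1/θ)) :
    ((1/2 - 2*θ + θ^2) * (1 - θ*x)^2)^2
      ≤ (θ^2 * (1 + (1 - 2*θ)*x + (1/2 - 2*θ + θ^2)*x^2))^2 := by
  have hθ₀ : 0 < θ := by linarith [hθ.1]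
  have hy : θ * x ∈ Set.Icc 0 1 := ⟨mul_nonneg hθ₀.le hx.1, (le_div_iff₀' hθ₀).1 hx.2⟩
  change P1 θ x ^ 2 ≤ P2 θ x ^ 2
  exact sq_le_sq' (neg_P2_le_P1 ⟨hθ₀.le, hθ.2⟩ hy) (P1_le_P2 hθ hy)
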